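/- arXiv:1807.00160 — 2 statements merged into one kernel-verified Lean document; each statement's English description precedes it below -/
import Mathlib

section
/- For all δ ≥ 0 and A ≥ 0 there exists a constant C = C(δ, A) with the following property. Let Y be a proper geodesic δ-hyperbolic metric space, let ρ₀ be a ray in Y, let h be a horofunction at ρ₀ with constant A, and let φ be an isometry of Y such that φ ∘ ρ₀ is asymptotic to ρ₀ and φ is not hyperbolic. Then |h(y) − h(φ(y))| ≤ C for all y ∈ Y. -/
section HyperbolicGeometry

variable {Y : Type*} [MetricSpace Y]

/-- `s` is a geodesic segment from `x` to `y`: the image of an isometric embedding of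
`[0, dist x y]` sending `0 ↦ x` and `dist x y ↦ y`. -/
def IsGeodesicSegment (s : Set Y) (x y : Y) : Prop :=
  ∃ c : ℝ → Y,
    (∀ t₁ ∈ Set.Icc (0 : ℝ) (dist x y), ∀ t₂ ∈ Set.Icc (0 : ℝ) (dist x y),
      dist (c t₁) (c t₂) = |t₁ - t₂|) ∧
    c 0 = x ∧ c (dist x y) = y ∧ s = c '' Set.Icc (0 : ℝ) (dist x y)

/-- A metric space is geodesic if any two points are connected by a geodesic segment. -/
def IsGeodesicSpace (Y : Type*) [MetricSpace Y] : Prop :=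
  ∀ x y : Y, ∃ s : Set Y, IsGeodesicSegment s x y

/-- `Y` is `δ`-hyperbolic: every geodesic triangle is `δ`-thin, i.e. each side is contained in
the `δ`-neighborhood of the union of the other two sides. -/
def IsDeltaHyperbolic (Y : Type*) [MetricSpace Y] (δ : ℝ) : Prop :=
  ∀ x y z : Y, ∀ sxy syz szx : Set Y,
    IsGeodesicSegment sxy x y → IsGeodesicSegment syz y z → IsGeodesicSegment szx z x →
      (∀ p ∈ sxy, ∃ q ∈ syz ∪ szx, dist p q ≤ δ) ∧
      (∀ p ∈ syz, ∃ q ∈ szx ∪ sxy, dist p q ≤ δ) ∧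
      (∀ p ∈ szx, ∃ q ∈ sxy ∪ syz, dist p q ≤ δ)

/-- A (geodesic) ray in `Y`, parameterized by `[0, ∞)`. -/
def IsRay (ρ : ℝ → Y) : Prop :=
  ∀ s t : ℝ, 0 ≤ s → 0 ≤ t → dist (ρ s) (ρ t) = |s - t|

/-- Two rays are asymptotic if their images are at finite Hausdorff distance. -/
def AsymptoticRays (ρ ρ' : ℝ → Y) : Prop :=
  ∃ D : ℝ, (∀ s : ℝ, 0 ≤ s → ∃ t : ℝ, 0 ≤ t ∧ dist (ρ s) (ρ' t) ≤ D) ∧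
    (∀ t : ℝ, 0 ≤ t → ∃ s : ℝ, 0 ≤ s ∧ dist (ρ s) (ρ' t) ≤ D)

/-- `h` is a horofunction at (the ideal point of) the ray `ρ₀` with constant `A`:
`h` is `1`-Lipschitz and decays with coarse slope `-1` along every ray asymptotic to `ρ₀`. -/
def IsHorofunction (ρ₀ : ℝ → Y) (A : ℝ) (h : Y → ℝ) : Prop :=
  LipschitzWith 1 h ∧
    ∀ ρ : ℝ → Y, IsRay ρ → AsymptoticRays ρ ρ₀ →
      ∀ t₁ t₂ : ℝ, 0 ≤ t₁ → 0 ≤ t₂ → |(h (ρ t₂) - h (ρ t₁)) - (t₁ - t₂)| ≤ A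

/-- An isometry `φ` of `Y` is hyperbolic if some (equivalently, every) orbit map
`ℤ → Y`, `n ↦ φⁿ y`, is a quasi-isometric embedding. -/
def IsHyperbolicIsometry (φ : Y ≃ᵢ Y) : Prop :=
  ∃ y : Y, ∃ L A : ℝ, 0 < L ∧ ∀ m n : ℤ,
    L⁻¹ * |(m : ℝ) - (n : ℝ)| - A ≤ dist ((φ ^ m) y) ((φ ^ n) y) ∧
    dist ((φ ^ m) y) ((φ ^ n) y) ≤ L * |(m : ℝ) - (n : ℝ)| + A

end HyperbolicGeometry

/-!
Two horofunctions at the same ideal point differ by a constant, up to an error controlled by `δ`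
and their constants: any two points are the origins of rays to that ideal point, and these rays
come `2 * δ`-close to each other, so that the difference of the values at the two points can be
read off the parameters at which the rays meet. If `φ` fixes the ideal point, then `h ∘ φ` is such
a horofunction too, hence the displacement `h ∘ φ - h` is coarsely constant. If it were large at
one point, it would be bounded away from zero with constant sign, `h` would drift linearly along
the orbits of `φ`, and since `h` is Lipschitz, `φ` would be hyperbolic.
-/

open Filter Set Topology
open scoped NNReal

section Geodesics

variable {Y : Type*} [MetricSpace Y] {c c' : ℝ → Y} {s : Set Y} {x x' y z p : Y} {δ t : ℝ}

/-- A geodesic path from `x` to `y`: a unit-speed parametrization of a geodesic segment. The map is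
defined on all of `ℝ`, and its values outside `[0, dist x y]` are irrelevant. -/
structure IsGeodesicPath (c : ℝ → Y) (x y : Y) : Prop where
  dist_eq : ∀ t₁ ∈ Icc 0 (dist x y), ∀ t₂ ∈ Icc 0 (dist x y), dist (c t₁) (c t₂) = |t₁ - t₂|
  source : c 0 = x
  target : c (dist x y) = y

theorem IsGeodesicPath.isGeodesicSegment (hc : IsGeodesicPath c x y) :
    IsGeodesicSegment (c '' Icc 0 (dist x y)) x y :=
  ⟨c, hc.dist_eq, hc.source, hc.target, rfl⟩

theorem IsGeodesicSegment.exists_isGeodesicPath (hs : IsGeodesicSegment s x y) :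
    ∃ c, IsGeodesicPath c x y ∧ s = c '' Icc 0 (dist x y) :=
  let ⟨c, hdist, hsource, htarget, himage⟩ := hs
  ⟨c, ⟨hdist, hsource, htarget⟩, himage⟩

theorem IsGeodesicSpace.exists_isGeodesicPath (hg : IsGeodesicSpace Y) (x y : Y) :
    ∃ c, IsGeodesicPath c x y :=
  let ⟨_, hs⟩ := hg x y
  let ⟨c, hc, _⟩ := hs.exists_isGeodesicPath
  ⟨c, hc⟩

theorem IsGeodesicPath.dist_source (hc : IsGeodesicPath c x y) (ht : t ∈ Icc 0 (dist x y)) :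
    dist x (c t) = t := by
  have h := hc.dist_eq 0 ⟨le_rfl, dist_nonneg⟩ t ht
  rwa [hc.source, zero_sub, abs_neg, abs_of_nonneg ht.1] at h

theorem IsGeodesicPath.dist_target (hc : IsGeodesicPath c x y) (ht : t ∈ Icc 0 (dist x y)) :
    dist (c t) y = dist x y - t := by
  have h := hc.dist_eq t ht (dist x y) ⟨dist_nonneg, le_rfl⟩
  rwa [hc.target, abs_sub_comm, abs_of_nonneg (sub_nonneg.2 ht.2)] at h

theorem IsGeodesicPath.reverse (hc : IsGeodesicPath c x y) :
    IsGeodesicPath (fun t => c (dist x y - t)) y x where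
  dist_eq t₁ ht₁ t₂ ht₂ := by
    rw [dist_comm y x] at ht₁ ht₂
    rw [hc.dist_eq _ (sub_mem_Icc_zero_iff_right.2 ht₁) _ (sub_mem_Icc_zero_iff_right.2 ht₂),
      sub_sub_sub_cancel_left, abs_sub_comm]
  source := by simp only [sub_zero, hc.target]
  target := by simp only [dist_comm y x, sub_self, hc.source]

theorem IsGeodesicSegment.symm (hs : IsGeodesicSegment s x y) : IsGeodesicSegment s y x := by
  obtain ⟨c, hc, rfl⟩ := hs.exists_isGeodesicPath
  have himage : (fun t => c (dist x y - t)) '' Icc 0 (dist y x) = c '' Icc 0 (dist x y) := by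
    rw [← image_image c, image_const_sub_Icc, sub_zero, dist_comm y x, sub_self]
  exact himage ▸ hc.reverse.isGeodesicSegment

theorem IsGeodesicSegment.dist_add_dist (hs : IsGeodesicSegment s x y) (hp : p ∈ s) :
    dist x p + dist p y = dist x y := by
  obtain ⟨c, hc, rfl⟩ := hs.exists_isGeodesicPath
  obtain ⟨t, ht, rfl⟩ := hp
  rw [hc.dist_source ht, hc.dist_target ht, add_sub_cancel]

theorem IsDeltaHyperbolic.dist_geodesicPath_le_of_common_target (hδ : IsDeltaHyperbolic Y δ)
    (hg : IsGeodesicSpace Y) (hc : IsGeodesicPath c x z) (hc' : IsGeodesicPath c' x' z)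
    (ht : t ∈ Icc 0 (dist x z)) (ht' : t ∈ Icc 0 (dist x' z)) :
    dist (c t) (c' t) ≤ 2 * δ + dist x x' := by
  obtain ⟨s, hs⟩ := hg x' x
  have hxt := hc.dist_source ht
  have hxt' := hc'.dist_source ht'
  obtain ⟨q, hq | hq, hqδ⟩ := (hδ _ _ _ _ _ _ hc.isGeodesicSegment
    hc'.isGeodesicSegment.symm hs).1 (c t) (mem_image_of_mem c ht)
  · obtain ⟨u, hu, rfl⟩ := hq
    have hxu := hc'.dist_source hu
    have htu : |u - t| ≤ δ + dist x x' := by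
      rw [abs_sub_le_iff]
      constructor
      · linarith [dist_triangle4 x' x (c t) (c' u), dist_comm x x']
      · linarith [dist_triangle4 x x' (c' u) (c t), dist_comm (c t) (c' u)]
    linarith [dist_triangle (c t) (c' u) (c' t), hc'.dist_eq u hu t ht']
  · have hqx := hs.dist_add_dist hq
    have ht_le : t ≤ dist q x + δ := by
      linarith [dist_triangle x q (c t), dist_comm x q, dist_comm (c t) q]
    linarith [dist_triangle4 (c t) q x' (c' t), dist_comm q x', dist_comm x x']

theorem IsDeltaHyperbolic.exists_dist_le_of_quadrilateral {w : Y} {swx sxy syz szw : Set Y}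
    (hδ : IsDeltaHyperbolic Y δ) (hg : IsGeodesicSpace Y)
    (hwx : IsGeodesicSegment swx w x) (hxy : IsGeodesicSegment sxy x y)
    (hyz : IsGeodesicSegment syz y z) (hzw : IsGeodesicSegment szw z w) (hp : p ∈ swx) :
    ∃ q ∈ sxy ∪ syz ∪ szw, dist p q ≤ 2 * δ := by
  obtain ⟨sxz, hxz⟩ := hg x z
  obtain ⟨q, hq | hq, hpq⟩ := (hδ _ _ _ _ _ _ hwx hxz hzw).1 p hp
  · obtain ⟨r, hr, hqr⟩ := (hδ _ _ _ _ _ _ hxz hyz.symm hxy.symm).1 q hq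
    refine ⟨r, Or.inl hr.symm, ?_⟩
    linarith [dist_triangle p q r]
  · have hδ_nonneg : 0 ≤ δ := dist_nonneg.trans hpq
    exact ⟨q, Or.inr hq, by linarith⟩

end Geodesics

section Rays

variable {Y Z : Type*} [MetricSpace Y] [MetricSpace Z] {ρ ρ' ρ'' : ℝ → Y} {δ t : ℝ}

theorem IsRay.dist_zero (hρ : IsRay ρ) (ht : 0 ≤ t) : dist (ρ 0) (ρ t) = t := by
  rw [hρ 0 t le_rfl ht, zero_sub, abs_neg, abs_of_nonneg ht]

theorem IsRay.isGeodesicPath (hρ : IsRay ρ) (ht : 0 ≤ t) : IsGeodesicPath ρ (ρ 0) (ρ t) where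
  dist_eq t₁ ht₁ t₂ ht₂ := hρ t₁ t₂ ht₁.1 ht₂.1
  source := rfl
  target := by rw [hρ.dist_zero ht]

theorem IsRay.isGeodesicSegment (hρ : IsRay ρ) (ht : 0 ≤ t) :
    IsGeodesicSegment (ρ '' Icc 0 t) (ρ 0) (ρ t) := by
  simpa only [hρ.dist_zero ht] using (hρ.isGeodesicPath ht).isGeodesicSegment

theorem IsRay.comp_isometry {f : Y → Z} (hρ : IsRay ρ) (hf : Isometry f) : IsRay (f ∘ ρ) :=
  fun s t hs ht => (hf.dist_eq _ _).trans (hρ s t hs ht)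

theorem IsRay.tendsto_dist_atTop (hρ : IsRay ρ) (y : Y) :
    Tendsto (fun t => dist y (ρ t)) atTop atTop := by
  refine tendsto_atTop_mono' _ ?_ (tendsto_atTop_add_const_right _ (-dist y (ρ 0)) tendsto_id)
  filter_upwards [eventually_ge_atTop 0] with t ht
  rw [id_eq]
  linarith [hρ.dist_zero ht, dist_triangle (ρ 0) y (ρ t), dist_comm y (ρ 0)]

theorem AsymptoticRays.of_dist_le {D : ℝ} (h : ∀ t, 0 ≤ t → dist (ρ t) (ρ' t) ≤ D) :
    AsymptoticRays ρ ρ' :=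
  ⟨D, fun t ht => ⟨t, ht, h t ht⟩, fun t ht => ⟨t, ht, h t ht⟩⟩

theorem AsymptoticRays.symm (h : AsymptoticRays ρ ρ') : AsymptoticRays ρ' ρ := by
  obtain ⟨D, hD, hD'⟩ := h
  simp only [dist_comm (ρ _)] at hD hD'
  exact ⟨D, hD', hD⟩

theorem AsymptoticRays.trans (h : AsymptoticRays ρ ρ') (h' : AsymptoticRays ρ' ρ'') :
    AsymptoticRays ρ ρ'' := by
  obtain ⟨D, hD, hD'⟩ := h
  obtain ⟨E, hE, hE'⟩ := h'
  refine ⟨D + E, fun s hs => ?_, fun t ht => ?_⟩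
  · obtain ⟨u, hu, hsu⟩ := hD s hs
    obtain ⟨t, ht, hut⟩ := hE u hu
    exact ⟨t, ht, (dist_triangle _ _ _).trans (add_le_add hsu hut)⟩
  · obtain ⟨u, hu, hut⟩ := hE' t ht
    obtain ⟨s, hs, hsu⟩ := hD' u hu
    exact ⟨s, hs, (dist_triangle _ _ _).trans (add_le_add hsu hut)⟩

theorem AsymptoticRays.comp_isometry {f : Y → Z} (h : AsymptoticRays ρ ρ') (hf : Isometry f) :
    AsymptoticRays (f ∘ ρ) (f ∘ ρ') := by
  simpa only [AsymptoticRays, Function.comp_apply, hf.dist_eq] using h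

theorem exists_isRay_tendsto_geodesicPath [ProperSpace Y] {ι : Type*} (U : Ultrafilter ι)
    {c : ι → ℝ → Y} {y : Y} {z : ι → Y} (hc : ∀ i, IsGeodesicPath (c i) y (z i))
    (hz : Tendsto (fun i => dist y (z i)) U atTop) :
    ∃ ρ, IsRay ρ ∧ ρ 0 = y ∧ ∀ t, 0 ≤ t → Tendsto (fun i => c i t) U (𝓝 (ρ t)) := by
  have hmem : ∀ t, 0 ≤ t → ∀ᶠ i in U, t ∈ Icc 0 (dist y (z i)) := fun t ht =>
    (hz.eventually_ge_atTop t).mono fun _ hi => ⟨ht, hi⟩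
  have hlim : ∀ t, ∃ p, 0 ≤ t → Tendsto (fun i => c i t) U (𝓝 p) := by
    intro t
    by_cases ht : 0 ≤ t
    · have hball : ∀ᶠ i in U, c i t ∈ Metric.closedBall y t :=
        (hmem t ht).mono fun i hi => Metric.mem_closedBall'.2 ((hc i).dist_source hi).le
      obtain ⟨p, -, hp⟩ := (isCompact_closedBall y t).ultrafilter_le_nhds
        (U.map fun i => c i t) (le_principal_iff.2 hball)
      exact ⟨p, fun _ => hp⟩
    · exact ⟨y, fun h => absurd h ht⟩
  choose ρ hρ using hlim
  refine ⟨ρ, fun s t hs ht => ?_, ?_, hρ⟩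
  · have hdist : ∀ᶠ i in U, |s - t| = dist (c i s) (c i t) := by
      filter_upwards [hmem s hs, hmem t ht] with i hsi hti
      exact ((hc i).dist_eq s hsi t hti).symm
    exact tendsto_nhds_unique ((hρ s hs).dist (hρ t ht)) (tendsto_const_nhds.congr' hdist)
  · refine tendsto_nhds_unique (hρ 0 le_rfl) ?_
    simp only [(hc _).source, tendsto_const_nhds]

theorem IsDeltaHyperbolic.exists_isRay_asymptoticRays [ProperSpace Y]
    (hδ : IsDeltaHyperbolic Y δ) (hg : IsGeodesicSpace Y) (hρ : IsRay ρ) (y : Y) :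
    ∃ ρ', IsRay ρ' ∧ ρ' 0 = y ∧ AsymptoticRays ρ' ρ := by
  let U : Ultrafilter ℝ := Ultrafilter.of atTop
  have hU : (U : Filter ℝ) ≤ atTop := Ultrafilter.of_le atTop
  choose c hc using fun T => hg.exists_isGeodesicPath y (ρ T)
  have hdist := (hρ.tendsto_dist_atTop y).mono_left hU
  obtain ⟨ρ', hρ', hρ'_zero, hlim⟩ := exists_isRay_tendsto_geodesicPath U hc hdist
  refine ⟨ρ', hρ', hρ'_zero, .of_dist_le (D := 2 * δ + dist y (ρ 0)) fun t ht => ?_⟩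
  refine le_of_tendsto ((hlim t ht).dist tendsto_const_nhds) ?_
  filter_upwards [hdist.eventually_ge_atTop t, hU (eventually_ge_atTop t)] with T hyT htT
  have hT : 0 ≤ T := ht.trans htT
  exact hδ.dist_geodesicPath_le_of_common_target hg (hc T) (hρ.isGeodesicPath hT) ⟨ht, hyT⟩
    ⟨ht, htT.trans_eq (hρ.dist_zero hT).symm⟩

theorem IsDeltaHyperbolic.exists_dist_le_of_asymptoticRays (hδ : IsDeltaHyperbolic Y δ)
    (hg : IsGeodesicSpace Y) (hρ : IsRay ρ) (hρ' : IsRay ρ') (h : AsymptoticRays ρ ρ') :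
    ∃ s t, 0 ≤ s ∧ 0 ≤ t ∧ dist (ρ s) (ρ' t) ≤ 2 * δ := by
  obtain ⟨D, hD, -⟩ := h
  -- `ρ s` is too far from the two sides joining the rays to be close to either of them.
  obtain ⟨s, hs⟩ := exists_gt (max 0 (2 * δ + dist (ρ 0) (ρ' 0)))
  obtain ⟨hs_pos, hs_far⟩ := max_lt_iff.1 hs
  obtain ⟨T, hT⟩ := exists_gt (max s (s + 2 * δ + D))
  obtain ⟨hsT, hT_far⟩ := max_lt_iff.1 hT
  have hT_pos : 0 < T := hs_pos.trans hsT
  obtain ⟨T', hT', hTT'⟩ := hD T hT_pos.le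
  obtain ⟨start, hstart⟩ := hg (ρ' 0) (ρ 0)
  obtain ⟨finish, hfinish⟩ := hg (ρ T) (ρ' T')
  obtain ⟨q, (hq | ⟨t, ht, rfl⟩) | hq, hsq⟩ := hδ.exists_dist_le_of_quadrilateral hg
    (hρ.isGeodesicSegment hT_pos.le) hfinish (hρ'.isGeodesicSegment hT').symm hstart
    (mem_image_of_mem ρ ⟨hs_pos.le, hsT.le⟩)
  · have hsT_dist : dist (ρ s) (ρ T) = T - s := by
      rw [hρ s T hs_pos.le hT_pos.le, abs_sub_comm, abs_of_pos (sub_pos.2 hsT)]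
    linarith [dist_triangle (ρ s) q (ρ T), dist_comm q (ρ T), hfinish.dist_add_dist hq,
      dist_nonneg (x := q) (y := ρ' T')]
  · exact ⟨s, t, hs_pos.le, ht.1, hsq⟩
  · linarith [hρ.dist_zero hs_pos.le, dist_triangle (ρ 0) q (ρ s), dist_comm q (ρ 0),
      dist_comm q (ρ s), hstart.dist_add_dist hq, dist_nonneg (x := ρ' 0) (y := q),
      dist_comm (ρ 0) (ρ' 0)]

end Rays

section Horofunctions

variable {Y Z : Type*} [MetricSpace Y] [MetricSpace Z] {ρ₀ ρ ρ' : ℝ → Y} {h h' : Y → ℝ}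
  {δ A A' : ℝ}

theorem IsHorofunction.comp_isometry {ρ₁ : ℝ → Z} {g : Z → ℝ} {f : Y → Z}
    (hg : IsHorofunction ρ₁ A g) (hf : Isometry f) (hρ : AsymptoticRays (f ∘ ρ₀) ρ₁) :
    IsHorofunction ρ₀ A (g ∘ f) :=
  ⟨by simpa only [one_mul] using hg.1.comp hf.lipschitz, fun ρ hray has =>
    hg.2 (f ∘ ρ) (hray.comp_isometry hf) ((has.comp_isometry hf).trans hρ)⟩

theorem IsHorofunction.abs_sub_sub_le_of_asymptoticRays (hh : IsHorofunction ρ₀ A h)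
    (hρ : IsRay ρ) (hρ₀ : AsymptoticRays ρ ρ₀) (hρ' : IsRay ρ') (hρ'₀ : AsymptoticRays ρ' ρ₀)
    {s t : ℝ} (hs : 0 ≤ s) (ht : 0 ≤ t) :
    |h (ρ 0) - h (ρ' 0) - (s - t)| ≤ 2 * A + dist (ρ s) (ρ' t) := by
  have hdecay := abs_le.1 (hh.2 ρ hρ hρ₀ 0 s le_rfl hs)
  have hdecay' := abs_le.1 (hh.2 ρ' hρ' hρ'₀ 0 t le_rfl ht)
  have hlip := hh.1.dist_le_mul (ρ s) (ρ' t)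
  rw [Real.dist_eq, NNReal.coe_one, one_mul, abs_le] at hlip
  rw [abs_le]
  constructor <;> linarith

theorem IsHorofunction.abs_sub_sub_sub_le [ProperSpace Y] (hδ : IsDeltaHyperbolic Y δ)
    (hg : IsGeodesicSpace Y) (hρ₀ : IsRay ρ₀) (hh : IsHorofunction ρ₀ A h)
    (hh' : IsHorofunction ρ₀ A' h') (x y : Y) :
    |(h x - h y) - (h' x - h' y)| ≤ 2 * A + 2 * A' + 4 * δ := by
  obtain ⟨ρ, hρ, rfl, hρρ₀⟩ := hδ.exists_isRay_asymptoticRays hg hρ₀ x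
  obtain ⟨ρ', hρ', rfl, hρ'ρ₀⟩ := hδ.exists_isRay_asymptoticRays hg hρ₀ y
  obtain ⟨s, t, hs, ht, hst⟩ :=
    hδ.exists_dist_le_of_asymptoticRays hg hρ hρ' (hρρ₀.trans hρ'ρ₀.symm)
  have hclose := hh.abs_sub_sub_le_of_asymptoticRays hρ hρρ₀ hρ' hρ'ρ₀ hs ht
  have hclose' := hh'.abs_sub_sub_le_of_asymptoticRays hρ hρρ₀ hρ' hρ'ρ₀ hs ht
  rw [abs_sub_comm] at hclose'
  linarith [abs_sub_le (h (ρ 0) - h (ρ' 0)) (s - t) (h' (ρ 0) - h' (ρ' 0))]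

end Horofunctions

section HyperbolicIsometries

variable {Y : Type*} [MetricSpace Y] (φ : Y ≃ᵢ Y)

theorem dist_isometryEquiv_pow_le (n : ℕ) (y : Y) :
    dist ((φ ^ n) y) y ≤ n * dist (φ y) y := by
  have hstep : ∀ k : ℕ, dist ((φ ^ k) y) ((φ ^ (k + 1)) y) = dist (φ y) y := fun k => by
    rw [pow_succ, IsometryEquiv.mul_apply, (φ ^ k).dist_eq, dist_comm]
  calc dist ((φ ^ n) y) y = dist ((φ ^ 0) y) ((φ ^ n) y) := dist_comm _ _
    _ ≤ ∑ k ∈ Finset.range n, dist ((φ ^ k) y) ((φ ^ (k + 1)) y) :=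
      dist_le_range_sum_dist (fun k => (φ ^ k) y) n
    _ = n * dist (φ y) y := by
      simp only [hstep, Finset.sum_const, Finset.card_range, nsmul_eq_mul]

theorem dist_isometryEquiv_zpow (m n : ℤ) (y : Y) :
    dist ((φ ^ m) y) ((φ ^ n) y) = dist ((φ ^ (m - n).natAbs) y) y := by
  wlog hnm : n ≤ m generalizing m n
  · rw [dist_comm, this n m (le_of_not_ge hnm), ← neg_sub, Int.natAbs_neg]
  · obtain ⟨k, rfl⟩ := Int.le.dest hnm
    rw [zpow_add, IsometryEquiv.mul_apply, (φ ^ n).dist_eq, add_sub_cancel_left, zpow_natCast,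
      Int.natAbs_natCast]

variable {φ} {y : Y} {ε : ℝ}

theorem IsHyperbolicIsometry.of_mul_le_dist (hε : 0 < ε)
    (h : ∀ n : ℕ, ε * n ≤ dist ((φ ^ n) y) y) : IsHyperbolicIsometry φ := by
  have hL : 0 < ε⁻¹ + dist (φ y) y := by positivity
  have hLε : (ε⁻¹ + dist (φ y) y)⁻¹ ≤ ε :=
    inv_le_of_inv_le₀ hε (le_add_of_nonneg_right dist_nonneg)
  refine ⟨y, ε⁻¹ + dist (φ y) y, 0, hL, fun m n => ?_⟩
  have hmn : |(m : ℝ) - n| = (m - n).natAbs := by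
    rw [Nat.cast_natAbs, Int.cast_abs, Int.cast_sub]
  rw [dist_isometryEquiv_zpow, hmn, sub_zero, add_zero]
  constructor
  · exact (mul_le_mul_of_nonneg_right hLε (Nat.cast_nonneg _)).trans (h _)
  · calc dist ((φ ^ (m - n).natAbs) y) y
        ≤ (m - n).natAbs * dist (φ y) y := dist_isometryEquiv_pow_le φ _ y
      _ = dist (φ y) y * (m - n).natAbs := mul_comm _ _
      _ ≤ (ε⁻¹ + dist (φ y) y) * (m - n).natAbs := by
        gcongr
        exact le_add_of_nonneg_left (inv_nonneg.2 hε.le)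

theorem IsHyperbolicIsometry.of_le_sub [Nonempty Y] {K : ℝ≥0} {f : Y → ℝ}
    (hf : LipschitzWith K f) (hε : 0 < ε) (hdrift : ∀ z, ε ≤ f (φ z) - f z) :
    IsHyperbolicIsometry φ := by
  obtain ⟨y⟩ := ‹Nonempty Y›
  have hsum : ∀ n : ℕ, ε * n ≤ f ((φ ^ n) y) - f y := fun n => by
    induction n with
    | zero => simp
    | succ n ih =>
      rw [pow_succ', IsometryEquiv.mul_apply]
      push_cast
      linarith [hdrift ((φ ^ n) y)]
  refine .of_mul_le_dist (y := y) (ε := ε / (K + 1)) (by positivity) fun n => ?_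
  rw [div_mul_eq_mul_div, div_le_iff₀ (by positivity)]
  calc ε * n ≤ f ((φ ^ n) y) - f y := hsum n
    _ ≤ K * dist ((φ ^ n) y) y := (le_abs_self _).trans (hf.dist_le_mul _ _)
    _ ≤ dist ((φ ^ n) y) y * (K + 1) := by linarith [dist_nonneg (x := (φ ^ n) y) (y := y)]

end HyperbolicIsometries

/-- For all `δ ≥ 0` and `A ≥ 0` there is `C = C(δ, A)`: if `Y` is a proper geodesic
`δ`-hyperbolic space, `h` a horofunction at a ray `ρ₀` with constant `A`, and `φ` an isometry
of `Y` fixing the ideal point of `ρ₀` (i.e. `φ ∘ ρ₀` is asymptotic to `ρ₀`) which is not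
hyperbolic, then `|h(y) − h(φ y)| ≤ C` for all `y ∈ Y`. -/
theorem nonhyperbolic_isometry_coarsely_preserves_horofunction :
    ∀ δ A : ℝ, 0 ≤ δ → 0 ≤ A → ∃ C : ℝ,
      ∀ (Y : Type*) [MetricSpace Y], ∀ (_ : ProperSpace Y),
        IsGeodesicSpace Y → IsDeltaHyperbolic Y δ →
        ∀ ρ₀ : ℝ → Y, IsRay ρ₀ →
        ∀ h : Y → ℝ, IsHorofunction ρ₀ A h →
        ∀ φ : Y ≃ᵢ Y, AsymptoticRays (fun t => φ (ρ₀ t)) ρ₀ → ¬ IsHyperbolicIsometry φ →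
        ∀ y : Y, |h y - h (φ y)| ≤ C := by
  intro δ A _ _
  refine ⟨4 * A + 4 * δ, fun Y _ _ hg hδ ρ₀ hρ₀ h hh φ hφ hnot_hyp y => ?_⟩
  have hdisplacement : ∀ z, |(h z - h (φ z)) - (h y - h (φ y))| ≤ 4 * A + 4 * δ := fun z => by
    have hclose := hh.abs_sub_sub_sub_le hδ hg hρ₀ (hh.comp_isometry φ.isometry hφ) z y
    rw [sub_sub_sub_comm] at hclose
    exact hclose.trans_eq (by ring)
  by_contra! hlarge
  have : Nonempty Y := ⟨y⟩
  rcases lt_abs.1 hlarge with hdown | hup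
  · refine hnot_hyp (.of_le_sub hh.1.neg (sub_pos.2 hdown) fun z => ?_)
    linarith [(abs_le.1 (hdisplacement z)).1, Pi.neg_apply h z, Pi.neg_apply h (φ z)]
  · refine hnot_hyp (.of_le_sub hh.1 (sub_pos.2 hup) fun z => ?_)
    linarith [(abs_le.1 (hdisplacement z)).2]
end

section
/- Let I ⊆ ℝ be an interval, let f : I → ℝ, let ε ≥ 0, and suppose there exists t₀ ∈ I such that f restricted to I ∩ (−∞, t₀] has ε-coarse slope −1 and f restricted to I ∩ [t₀, +∞) has ε-coarse slope +1. Then f is 2ε-coarsely convex: f(μ₁t₁ + μ₂t₂) ≤ μ₁f(t₁) + μ₂f(t₂) + 2ε for all t₁, t₂ ∈ I and all μ₁, μ₂ ≥ 0 with μ₁ + μ₂ = 1. -/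
/-!
On `I` the function `f` stays within `ε` of the wedge that passes through `(t₀, f t₀)` with slope
`a` to the left of `t₀` and slope `b` to the right. For `a ≤ b` the wedge is a maximum of two affine
functions, hence convex, and a function within `ε` of a convex one is convex up to `2ε`: one `ε` is
lost at the convex combination and one at the endpoints.
-/

open Set

/-- `f` has `ε`-coarse slope `m` on `J`: its increments over `J` differ from those of a linear
function of slope `m` by at most `ε`. -/
def HasCoarseSlopeOn (ε m : ℝ) (J : Set ℝ) (f : ℝ → ℝ) : Prop :=
  ∀ t₁ ∈ J, ∀ t₂ ∈ J, |f t₁ - f t₂ - m * (t₁ - t₂)| ≤ ε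

/-- `f` is `ε`-coarsely convex on `s`: Jensen's inequality for two points of `s` holds up to the
additive error `ε`. Unlike in `ConvexOn`, convexity of `s` is not part of the definition. -/
def CoarselyConvexOn {E : Type*} [AddCommGroup E] [Module ℝ E] (ε : ℝ) (s : Set E) (f : E → ℝ) :
    Prop :=
  ∀ x ∈ s, ∀ y ∈ s, ∀ a b : ℝ, 0 ≤ a → 0 ≤ b → a + b = 1 →
    f (a • x + b • y) ≤ a * f x + b * f y + ε

/-- The function through `(t₀, c)` that is affine of slope `a` to the left of `t₀` and of slope `b`
to the right. The formula as a maximum has this shape only for `a ≤ b`. -/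
def convexWedge (a b t₀ c t : ℝ) : ℝ :=
  max (c + a * (t - t₀)) (c + b * (t - t₀))

section Wedge

variable {a b t₀ c t : ℝ}

theorem convexWedge_of_le (hab : a ≤ b) (ht : t ≤ t₀) :
    convexWedge a b t₀ c t = c + a * (t - t₀) :=
  max_eq_left <| add_le_add_right (mul_le_mul_of_nonpos_right hab (sub_nonpos.2 ht)) c

theorem convexWedge_of_ge (hab : a ≤ b) (ht : t₀ ≤ t) :
    convexWedge a b t₀ c t = c + b * (t - t₀) :=
  max_eq_right <| add_le_add_right (mul_le_mul_of_nonneg_right hab (sub_nonneg.2 ht)) c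

theorem convexOn_add_mul_sub (m t₀ c : ℝ) {s : Set ℝ} (hs : Convex ℝ s) :
    ConvexOn ℝ s fun t ↦ c + m * (t - t₀) := by
  refine ⟨hs, fun x _ y _ p q _ _ hpq ↦ le_of_eq ?_⟩
  simp only [smul_eq_mul]
  linear_combination (m * t₀ - c) * hpq

theorem convexOn_convexWedge (a b t₀ c : ℝ) {s : Set ℝ} (hs : Convex ℝ s) :
    ConvexOn ℝ s (convexWedge a b t₀ c) :=
  (convexOn_add_mul_sub a t₀ c hs).sup (convexOn_add_mul_sub b t₀ c hs)

end Wedge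

theorem HasCoarseSlopeOn.abs_sub_affine_le {ε m t t₀ : ℝ} {J : Set ℝ} {f : ℝ → ℝ}
    (hf : HasCoarseSlopeOn ε m J f) (ht : t ∈ J) (ht₀ : t₀ ∈ J) :
    |f t - (f t₀ + m * (t - t₀))| ≤ ε := by
  simpa only [sub_sub] using hf t ht t₀ ht₀

theorem abs_sub_convexWedge_le_of_hasCoarseSlopeOn {ε a b t₀ t : ℝ} {I : Set ℝ} {f : ℝ → ℝ}
    (hab : a ≤ b) (ht₀ : t₀ ∈ I) (hleft : HasCoarseSlopeOn ε a (I ∩ Iic t₀) f)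
    (hright : HasCoarseSlopeOn ε b (I ∩ Ici t₀) f) (ht : t ∈ I) :
    |f t - convexWedge a b t₀ (f t₀) t| ≤ ε := by
  rcases le_total t t₀ with hle | hge
  · rw [convexWedge_of_le hab hle]
    exact hleft.abs_sub_affine_le ⟨ht, hle⟩ ⟨ht₀, self_mem_Iic⟩
  · rw [convexWedge_of_ge hab hge]
    exact hright.abs_sub_affine_le ⟨ht, hge⟩ ⟨ht₀, self_mem_Ici⟩

theorem coarselyConvexOn_of_abs_sub_convexOn_le {E : Type*} [AddCommGroup E] [Module ℝ E] {ε : ℝ}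
    {s : Set E} {f g : E → ℝ} (hg : ConvexOn ℝ s g) (hfg : ∀ x ∈ s, |f x - g x| ≤ ε) :
    CoarselyConvexOn (2 * ε) s f := by
  intro x hx y hy a b ha hb hab
  have f_le : ∀ z ∈ s, f z ≤ g z + ε := fun z hz ↦ by linarith [(abs_le.1 (hfg z hz)).2]
  have g_le : ∀ z ∈ s, g z ≤ f z + ε := fun z hz ↦ by linarith [(abs_le.1 (hfg z hz)).1]
  calc f (a • x + b • y)
      ≤ g (a • x + b • y) + ε := f_le _ (hg.1 hx hy ha hb hab)
    _ ≤ a * g x + b * g y + ε := by gcongr; exact hg.2 hx hy ha hb hab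
    _ ≤ a * (f x + ε) + b * (f y + ε) + ε := by gcongr <;> exact g_le _ ‹_›
    _ = a * f x + b * f y + 2 * ε := by linear_combination ε * hab

theorem coarselyConvex_of_coarse_slopes_general {ε a b t₀ : ℝ} {I : Set ℝ} {f : ℝ → ℝ}
    (hI : I.OrdConnected) (hab : a ≤ b) (ht₀ : t₀ ∈ I)
    (hleft : HasCoarseSlopeOn ε a (I ∩ Iic t₀) f)
    (hright : HasCoarseSlopeOn ε b (I ∩ Ici t₀) f) :
    CoarselyConvexOn (2 * ε) I f :=
  coarselyConvexOn_of_abs_sub_convexOn_le (convexOn_convexWedge a b t₀ (f t₀) hI.convex)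
    fun _ ht ↦ abs_sub_convexWedge_le_of_hasCoarseSlopeOn hab ht₀ hleft hright ht

/-- If `f : I → ℝ` on an interval `I` has `ε`-coarse slope `-1` on `I ∩ (-∞, t₀]` and
`ε`-coarse slope `+1` on `I ∩ [t₀, ∞)` for some `t₀ ∈ I`, then `f` is `2ε`-coarsely convex. -/
theorem coarselyConvex_of_coarse_slopes
    (I : Set ℝ) (hI : I.OrdConnected) (f : ℝ → ℝ) (ε : ℝ) (hε : 0 ≤ ε)
    (t₀ : ℝ) (ht₀ : t₀ ∈ I)
    (hleft : ∀ t₁ ∈ I, ∀ t₂ ∈ I, t₁ ≤ t₀ → t₂ ≤ t₀ →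
      |f t₁ - f t₂ - (-1) * (t₁ - t₂)| ≤ ε)
    (hright : ∀ t₁ ∈ I, ∀ t₂ ∈ I, t₀ ≤ t₁ → t₀ ≤ t₂ →
      |f t₁ - f t₂ - 1 * (t₁ - t₂)| ≤ ε) :
    ∀ t₁ ∈ I, ∀ t₂ ∈ I, ∀ μ₁ μ₂ : ℝ, 0 ≤ μ₁ → 0 ≤ μ₂ → μ₁ + μ₂ = 1 →
      f (μ₁ * t₁ + μ₂ * t₂) ≤ μ₁ * f t₁ + μ₂ * f t₂ + 2 * ε :=
  coarselyConvex_of_coarse_slopes_general hI (by norm_num) ht₀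
    (fun t₁ h₁ t₂ h₂ ↦ hleft t₁ h₁.1 t₂ h₂.1 h₁.2 h₂.2)
    (fun t₁ h₁ t₂ h₂ ↦ hright t₁ h₁.1 t₂ h₂.1 h₁.2 h₂.2)
end
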